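/- The k-linear map ρ^ss_O : T_or → T_or ⊗ T_or defined on an oriented tree T by ρ^ss_O(T) = Σ_{e ∈ E(T)} (T_e^1 ⊗ T_e^2 − T_e^2 ⊗ T_e^1) is a Lie cobracket on T_or. -/

import Mathlib

/-!
Statement 2: the map `ρ^ss_O(T) = Σ_{e ∈ E(T)} (T_e^1 ⊗ T_e^2 − T_e^2 ⊗ T_e^1)` is a Lie
cobracket on the free `k`-module `T_or` with basis the isomorphism classes of oriented
trees.  Here `T_e^2` is the component of `T ∖ {e}` that `e` points to and `T_e^1` the
component that `e` points away from.
-/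

open TensorProduct

noncomputable section

section LieCoalg

variable (k : Type*) [CommRing k] (g : Type*) [AddCommGroup g] [Module k g]

/-- `τ_{(12)}` on `g ⊗ g`. -/
def tau2 : g ⊗[k] g →ₗ[k] g ⊗[k] g := (TensorProduct.comm k g g).toLinearMap

/-- `τ_{(132)}` on the triple tensor product `g ⊗ (g ⊗ g)`: `x⊗y⊗z ↦ y⊗z⊗x`. -/
def tau132 : g ⊗[k] (g ⊗[k] g) →ₗ[k] g ⊗[k] (g ⊗[k] g) :=
  (TensorProduct.assoc k g g g).toLinearMap ∘ₗ
    (TensorProduct.comm k g (g ⊗[k] g)).toLinearMap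

/-- `τ_{(123)}` on the triple tensor product: `x⊗y⊗z ↦ z⊗x⊗y`. -/
def tau123 : g ⊗[k] (g ⊗[k] g) →ₗ[k] g ⊗[k] (g ⊗[k] g) :=
  tau132 k g ∘ₗ tau132 k g

variable {k g}

/-- `(δ ⊗ Id) ∘ δ : g → g ⊗ g ⊗ g` (triple tensor product associated as `g ⊗ (g ⊗ g)`). -/
def leftIter (δ : g →ₗ[k] g ⊗[k] g) : g →ₗ[k] g ⊗[k] (g ⊗[k] g) :=
  ((TensorProduct.assoc k g g g).toLinearMap ∘ₗ LinearMap.rTensor g δ) ∘ₗ δ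

/-- `δ : g → g ⊗ g` is a Lie cobracket if `τ_{(12)} ∘ δ = −δ` and
`(Id + τ_{(123)} + τ_{(132)}) ∘ (δ ⊗ Id) ∘ δ = 0` (co-Jacobi identity). -/
def IsLieCobracket (δ : g →ₗ[k] g ⊗[k] g) : Prop :=
  (tau2 k g) ∘ₗ δ = -δ ∧
  (LinearMap.id + tau123 k g + tau132 k g) ∘ₗ leftIter δ = 0

end LieCoalg

/-- The sum of a list of elements of an additive commutative monoid. -/
def lsum {M : Type*} [AddCommMonoid M] (l : List M) : M := l.foldr (· + ·) 0

/-- Planar rooted representations of oriented trees: each child carries a `Bool`, which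
is `true` exactly when the corresponding edge is oriented from the parent to the child.
The auxiliary root and planar data are forgotten upon passing to `OTreeIso` below. -/
inductive OTree : Type
  | node : List (Bool × OTree) → OTree

/-- Rooted isomorphism (permuting children, preserving edge orientations). -/
inductive OTree.EquivP : OTree → OTree → Prop
  | node {l l₂ l' : List (Bool × OTree)} :
      l.map Prod.fst = l₂.map Prod.fst →
      List.Forall₂ OTree.EquivP (l.map Prod.snd) (l₂.map Prod.snd) → l₂.Perm l' →
      OTree.EquivP (.node l) (.node l')

/-- Generating relation for isomorphism of the underlying (unrooted) oriented trees:
rooted isomorphisms together with moving the root along an edge.  Two planar rooted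
representations represent the same oriented tree iff they are related by the equivalence
closure of this relation. -/
inductive OTree.Rel : OTree → OTree → Prop
  | perm {t t'} : OTree.EquivP t t' → OTree.Rel t t'
  | reroot {b : Bool} {ls ts : List (Bool × OTree)} :
      OTree.Rel (.node ((b, .node ls) :: ts)) (.node (ls ++ [(!b, .node ts)]))

/-- Isomorphism classes of oriented trees. -/
def OTreeIso : Type := Quot OTree.Rel

mutual
/-- All one-edge cuts of (a rooted representation of) an oriented tree: for each edge
`e`, the triple `(b, A, B)` where `b` records the orientation of `e` (`true` iff `e`
points away from the root-side component), `A` is the component of `T ∖ {e}` away from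
the root and `B` is the component containing the root. -/
def OTree.cuts : OTree → List (Bool × OTree × OTree)
  | .node l => (OTree.cutsL l).map (fun p => (p.1, p.2.1, .node p.2.2))
/-- Auxiliary to `OTree.cuts`. -/
def OTree.cutsL : List (Bool × OTree) → List (Bool × OTree × List (Bool × OTree))
  | [] => []
  | (b, t) :: ts =>
      ((b, t, ts) :: (OTree.cuts t).map (fun p => (p.1, p.2.1, (b, p.2.2) :: ts)))
        ++ (OTree.cutsL ts).map (fun p => (p.1, p.2.1, (b, t) :: p.2.2))
end

variable (k : Type*) [CommRing k]

/-- `T_or`: the free `k`-module with basis the isomorphism classes of oriented trees. -/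
abbrev Tor := OTreeIso →₀ k

/-- The basis vector of an oriented tree. -/
def otv (t : OTree) : Tor k := Finsupp.single (Quot.mk OTree.Rel t) (1 : k)

/-- The cobracket `ρ^ss_O(T) = Σ_{e ∈ E(T)} (T_e^1 ⊗ T_e^2 − T_e^2 ⊗ T_e^1)`, where
`T_e^2` is the component of `T ∖ {e}` that `e` points to, and `T_e^1` is the component
that `e` points away from (defined via a representative of the isomorphism class; the
result does not depend on this choice). -/
def rhoO : Tor k →ₗ[k] Tor k ⊗[k] Tor k :=
  Finsupp.lift (Tor k ⊗[k] Tor k) k OTreeIso fun q =>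
    lsum ((OTree.cuts q.out).map fun p =>
      let T1 : OTree := if p.1 then p.2.2 else p.2.1
      let T2 : OTree := if p.1 then p.2.1 else p.2.2
      otv k T1 ⊗ₜ[k] otv k T2 - otv k T2 ⊗ₜ[k] otv k T1)

/-!
A right co-pre-Lie coproduct `Δ` antisymmetrizes to a Lie cobracket `Δ - τ Δ`, and Lie cobrackets
descend along linear surjections. On the free module on planar rooted trees, put
`Δ t = ∑ₑ ± B ⊗ A`, where `A` is the branch cut off by `e`, `B` is the rest, and the sign records
the orientation of `e`. Cutting `B` again meets every ordered pair of edges of `t` except those in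
which the second edge lies inside `A`, while cutting `A` again meets exactly the pairs in which the
second edge lies above the first. The coassociator is therefore a sum over pairs of edges neither
of which lies above the other. The two cuts of such a pair commute, which is the co-pre-Lie
identity. Finally `Δ - τ Δ` does not see which component contains the root, so it descends to
unrooted trees, where it is `ρ^ss_O`.
-/

section CoPreLie

variable {k} {g : Type*} [AddCommGroup g] [Module k g]

theorem leftIter_apply (Δ : g →ₗ[k] g ⊗[k] g) (x : g) :
    leftIter Δ x = TensorProduct.assoc k g g g (LinearMap.rTensor g Δ (Δ x)) := rfl

/-- The coassociator `(Δ ⊗ Id) ∘ Δ - (Id ⊗ Δ) ∘ Δ` of a coproduct, with values in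
`g ⊗ (g ⊗ g)`. -/
def coassociator (Δ : g →ₗ[k] g ⊗[k] g) : g →ₗ[k] g ⊗[k] (g ⊗[k] g) :=
  leftIter Δ - LinearMap.lTensor g Δ ∘ₗ Δ

theorem coassociator_apply (Δ : g →ₗ[k] g ⊗[k] g) (x : g) :
    coassociator Δ x = leftIter Δ x - LinearMap.lTensor g Δ (Δ x) := rfl

/-- A right co-pre-Lie coproduct: the dual of a right pre-Lie product, whose associator is
symmetric in its last two arguments. -/
def IsCoPreLie (Δ : g →ₗ[k] g ⊗[k] g) : Prop :=
  LinearMap.lTensor g (tau2 k g) ∘ₗ coassociator Δ = coassociator Δ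

/-- The cobracket `Δ - τ_{(12)} ∘ Δ`, dual to the commutator of a product. -/
def cocommutator (Δ : g →ₗ[k] g ⊗[k] g) : g →ₗ[k] g ⊗[k] g :=
  Δ - tau2 k g ∘ₗ Δ

theorem cocommutator_apply (Δ : g →ₗ[k] g ⊗[k] g) (x : g) :
    cocommutator Δ x = Δ x - tau2 k g (Δ x) := rfl

variable (k g) in
/-- The sum `Id + τ_{(123)} + τ_{(132)}` of the cyclic permutations of a triple tensor. -/
def cyclicSum : g ⊗[k] (g ⊗[k] g) →ₗ[k] g ⊗[k] (g ⊗[k] g) :=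
  LinearMap.id + tau123 k g + tau132 k g

theorem tau2_tau2 (x : g ⊗[k] g) : tau2 k g (tau2 k g x) = x :=
  (TensorProduct.comm k g g).symm_apply_apply x

theorem tau2_comp_cocommutator (Δ : g →ₗ[k] g ⊗[k] g) :
    tau2 k g ∘ₗ cocommutator Δ = -cocommutator Δ := by
  ext x
  simp [cocommutator, tau2_tau2]

theorem tau132_tau132_tau132 (x : g ⊗[k] (g ⊗[k] g)) :
    tau132 k g (tau132 k g (tau132 k g x)) = x := by
  have h : tau132 k g ∘ₗ tau132 k g ∘ₗ tau132 k g = LinearMap.id := by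
    ext
    rfl
  exact LinearMap.congr_fun h x

theorem cyclicSum_tau132 (x : g ⊗[k] (g ⊗[k] g)) :
    cyclicSum k g (tau132 k g x) = cyclicSum k g x := by
  simp only [cyclicSum, tau123, LinearMap.add_apply, LinearMap.id_apply, LinearMap.comp_apply,
    tau132_tau132_tau132]
  abel

theorem assoc_rTensor_tau2 (x : (g ⊗[k] g) ⊗[k] g) :
    TensorProduct.assoc k g g g (LinearMap.rTensor g (tau2 k g) x) =
      tau132 k g (tau132 k g (LinearMap.lTensor g (tau2 k g) (TensorProduct.assoc k g g g x))) := by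
  have h : (TensorProduct.assoc k g g g).toLinearMap ∘ₗ LinearMap.rTensor g (tau2 k g) =
      tau132 k g ∘ₗ tau132 k g ∘ₗ LinearMap.lTensor g (tau2 k g) ∘ₗ
        (TensorProduct.assoc k g g g).toLinearMap := by
    ext
    rfl
  exact LinearMap.congr_fun h x

theorem assoc_rTensor_apply_tau2 (Δ : g →ₗ[k] g ⊗[k] g) (x : g ⊗[k] g) :
    TensorProduct.assoc k g g g (LinearMap.rTensor g Δ (tau2 k g x)) =
      tau132 k g (LinearMap.lTensor g Δ x) := by
  simp only [tau2, tau132, LinearMap.comp_apply, LinearEquiv.coe_coe, LinearMap.rTensor_comm]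

theorem leftIter_cocommutator (Δ : g →ₗ[k] g ⊗[k] g) (x : g) :
    leftIter (cocommutator Δ) x =
      (leftIter Δ x - tau132 k g (tau132 k g (LinearMap.lTensor g (tau2 k g) (leftIter Δ x)))) -
        (tau132 k g (LinearMap.lTensor g Δ (Δ x)) -
          tau132 k g (tau132 k g (LinearMap.lTensor g (tau2 k g)
            (tau132 k g (LinearMap.lTensor g Δ (Δ x)))))) := by
  simp only [leftIter, cocommutator, LinearMap.comp_apply, LinearMap.sub_apply,
    LinearMap.rTensor_sub, LinearMap.rTensor_comp, map_sub, LinearEquiv.coe_coe,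
    assoc_rTensor_tau2, assoc_rTensor_apply_tau2]

theorem lTensor_tau2_tau132 (x : g ⊗[k] (g ⊗[k] g)) :
    LinearMap.lTensor g (tau2 k g) (tau132 k g x) =
      tau132 k g (tau132 k g (LinearMap.lTensor g (tau2 k g) x)) := by
  have h : LinearMap.lTensor g (tau2 k g) ∘ₗ tau132 k g =
      tau132 k g ∘ₗ tau132 k g ∘ₗ LinearMap.lTensor g (tau2 k g) := by
    ext
    rfl
  exact LinearMap.congr_fun h x

theorem cyclicSum_leftIter_cocommutator (Δ : g →ₗ[k] g ⊗[k] g) (x : g) :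
    cyclicSum k g (leftIter (cocommutator Δ) x) =
      cyclicSum k g (coassociator Δ x - LinearMap.lTensor g (tau2 k g) (coassociator Δ x)) := by
  simp only [leftIter_cocommutator, coassociator_apply, map_sub, cyclicSum_tau132,
    lTensor_tau2_tau132]
  abel

theorem IsCoPreLie.isLieCobracket_cocommutator {Δ : g →ₗ[k] g ⊗[k] g} (h : IsCoPreLie Δ) :
    IsLieCobracket (cocommutator Δ) := by
  refine ⟨tau2_comp_cocommutator Δ, LinearMap.ext fun x => ?_⟩
  have hx : LinearMap.lTensor g (tau2 k g) (coassociator Δ x) = coassociator Δ x :=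
    LinearMap.congr_fun h x
  calc cyclicSum k g (leftIter (cocommutator Δ) x)
      = cyclicSum k g (coassociator Δ x - LinearMap.lTensor g (tau2 k g) (coassociator Δ x)) :=
        cyclicSum_leftIter_cocommutator Δ x
    _ = 0 := by rw [hx, sub_self, map_zero]

end CoPreLie

section Descent

variable {k} {g h : Type*} [AddCommGroup g] [Module k g] [AddCommGroup h] [Module k h]

theorem map_tau2 (f : g →ₗ[k] h) (x : g ⊗[k] g) :
    TensorProduct.map f f (tau2 k g x) = tau2 k h (TensorProduct.map f f x) :=
  TensorProduct.map_comm ..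

theorem map_map_tau132 (f : g →ₗ[k] h) (x : g ⊗[k] (g ⊗[k] g)) :
    TensorProduct.map f (TensorProduct.map f f) (tau132 k g x) =
      tau132 k h (TensorProduct.map f (TensorProduct.map f f) x) := by
  simp [tau132, TensorProduct.map_map_assoc, TensorProduct.map_comm]

theorem map_map_cyclicSum (f : g →ₗ[k] h) (x : g ⊗[k] (g ⊗[k] g)) :
    TensorProduct.map f (TensorProduct.map f f) (cyclicSum k g x) =
      cyclicSum k h (TensorProduct.map f (TensorProduct.map f f) x) := by
  simp only [cyclicSum, tau123, LinearMap.add_apply, LinearMap.id_apply, LinearMap.comp_apply,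
    map_add, map_map_tau132]

theorem leftIter_apply_of_comp_eq {f : g →ₗ[k] h} {δ : g →ₗ[k] g ⊗[k] g} {ε : h →ₗ[k] h ⊗[k] h}
    (hf : ε ∘ₗ f = TensorProduct.map f f ∘ₗ δ) (x : g) :
    leftIter ε (f x) = TensorProduct.map f (TensorProduct.map f f) (leftIter δ x) := by
  have hx : ε (f x) = TensorProduct.map f f (δ x) := LinearMap.congr_fun hf x
  rw [leftIter_apply, leftIter_apply, hx, TensorProduct.map_map_assoc,
    ← LinearMap.comp_apply (LinearMap.rTensor h ε), LinearMap.rTensor_comp_map, hf,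
    ← LinearMap.map_comp_rTensor, LinearMap.comp_apply]

theorem IsLieCobracket.of_surjective {f : g →ₗ[k] h} {δ : g →ₗ[k] g ⊗[k] g}
    {ε : h →ₗ[k] h ⊗[k] h} (hδ : IsLieCobracket δ) (hsurj : Function.Surjective f)
    (hf : ε ∘ₗ f = TensorProduct.map f f ∘ₗ δ) : IsLieCobracket ε := by
  obtain ⟨hskew, hJacobi⟩ := hδ
  constructor <;> refine LinearMap.ext (hsurj.forall.2 fun x => ?_)
  · have hx : ε (f x) = TensorProduct.map f f (δ x) := LinearMap.congr_fun hf x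
    have hδx : tau2 k g (δ x) = -δ x := LinearMap.congr_fun hskew x
    rw [LinearMap.comp_apply, LinearMap.neg_apply, hx, ← map_tau2, hδx, map_neg]
  · have hδx : cyclicSum k g (leftIter δ x) = 0 := LinearMap.congr_fun hJacobi x
    calc cyclicSum k h (leftIter ε (f x))
        = TensorProduct.map f (TensorProduct.map f f) (cyclicSum k g (leftIter δ x)) := by
          rw [leftIter_apply_of_comp_eq hf, map_map_cyclicSum]
      _ = 0 := by rw [hδx, map_zero]

end Descent

namespace OTree

section SumCuts

variable {α β M N : Type*} [AddCommMonoid M] [AddCommMonoid N]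

/-- The sum of `F` over a list of triples such as `OTree.cuts t` or `OTree.cutsL l`; the curried
`F` keeps the orientation, the branch and the root component of a cut named. -/
def sumCuts (L : List (Bool × OTree × α)) (F : Bool → OTree → α → M) : M :=
  (L.map fun p => F p.1 p.2.1 p.2.2).sum

theorem sumCuts_map (L : List (Bool × OTree × α)) (f : α → β) (F : Bool → OTree → β → M) :
    sumCuts (L.map fun p => (p.1, p.2.1, f p.2.2)) F = sumCuts L fun b A B => F b A (f B) := by
  simp only [sumCuts, List.map_map, Function.comp_def]

theorem sumCuts_add (L : List (Bool × OTree × α)) (F G : Bool → OTree → α → M) :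
    (sumCuts L fun b A B => F b A B + G b A B) = sumCuts L F + sumCuts L G :=
  List.sum_map_add ..

theorem map_sumCuts {H : Type*} [FunLike H M N] [AddMonoidHomClass H M N] (φ : H)
    (L : List (Bool × OTree × α)) (F : Bool → OTree → α → M) :
    φ (sumCuts L F) = sumCuts L fun b A B => φ (F b A B) := by
  simp only [sumCuts, map_list_sum, List.map_map, Function.comp_def]

theorem smul_sumCuts {R : Type*} [DistribSMul R M] (r : R) (L : List (Bool × OTree × α))
    (F : Bool → OTree → α → M) : r • sumCuts L F = sumCuts L fun b A B => r • F b A B :=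
  map_sumCuts (DistribSMul.toAddMonoidHom M r) L F

theorem sumCuts_tmul {R : Type*} [CommSemiring R] [Module R M] [Module R N]
    (L : List (Bool × OTree × α)) (F : Bool → OTree → α → M) (y : N) :
    sumCuts L F ⊗ₜ[R] y = sumCuts L fun b A B => F b A B ⊗ₜ[R] y :=
  map_sumCuts ((TensorProduct.mk R M N).flip y) L F

theorem tmul_sumCuts {R : Type*} [CommSemiring R] [Module R M] [Module R N]
    (x : M) (L : List (Bool × OTree × α)) (F : Bool → OTree → α → N) :
    x ⊗ₜ[R] sumCuts L F = sumCuts L fun b A B => x ⊗ₜ[R] F b A B :=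
  map_sumCuts (TensorProduct.mk R M N x) L F

theorem sumCuts_comm (L : List (Bool × OTree × α)) (L' : List (Bool × OTree × β))
    (F : Bool → OTree → α → Bool → OTree → β → M) :
    (sumCuts L fun b A B => sumCuts L' fun c C D => F b A B c C D) =
      sumCuts L' fun c C D => sumCuts L fun b A B => F b A B c C D := by
  simpa only [sumCuts, Multiset.map_coe, Multiset.sum_coe] using
    Multiset.sum_map_sum_map (L : Multiset (Bool × OTree × α)) (L' : Multiset (Bool × OTree × β))

theorem sumCuts_cuts_node (l : List (Bool × OTree)) (F : Bool → OTree → OTree → M) :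
    sumCuts (cuts (.node l)) F = sumCuts (cutsL l) fun b A B => F b A (.node B) := by
  rw [cuts, sumCuts_map]

theorem sumCuts_cutsL_nil (F : Bool → OTree → List (Bool × OTree) → M) :
    sumCuts (cutsL []) F = 0 := by
  rw [cutsL]
  rfl

theorem sumCuts_cutsL_cons (b : Bool) (t : OTree) (ts : List (Bool × OTree))
    (F : Bool → OTree → List (Bool × OTree) → M) :
    sumCuts (cutsL ((b, t) :: ts)) F =
      F b t ts + (sumCuts (cuts t) fun c A B => F c A ((b, B) :: ts)) +
        sumCuts (cutsL ts) fun c A B => F c A ((b, t) :: B) := by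
  rw [← sumCuts_map (cuts t) (fun B => (b, B) :: ts), ← sumCuts_map (cutsL ts)]
  simp only [sumCuts, cutsL, List.map_append, List.sum_append, List.map_cons, List.sum_cons]

theorem sumCuts_cutsL_append (l l' : List (Bool × OTree))
    (F : Bool → OTree → List (Bool × OTree) → M) :
    sumCuts (cutsL (l ++ l')) F =
      (sumCuts (cutsL l) fun c A B => F c A (B ++ l')) +
        sumCuts (cutsL l') fun c A B => F c A (l ++ B) := by
  induction l generalizing F with
  | nil => simp only [List.nil_append, sumCuts_cutsL_nil, zero_add]
  | cons p l ih =>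
    obtain ⟨b, t⟩ := p
    simp only [List.cons_append, sumCuts_cutsL_cons, ih, add_assoc]

theorem sumCuts_sub {M : Type*} [AddCommGroup M] (L : List (Bool × OTree × α))
    (F G : Bool → OTree → α → M) :
    (sumCuts L fun b A B => F b A B - G b A B) = sumCuts L F - sumCuts L G := by
  simp only [eq_sub_iff_add_eq, ← sumCuts_add, sub_add_cancel]

end SumCuts

section IncomparableCuts

variable {α M N : Type*} [AddCommGroup M] [AddCommGroup N]

/-- The sum of `G b c A C D` over the ordered pairs of edges neither of which lies above the
other, with orientations `b` and `c`, branches `A` and `C`, and remaining root component `D`. It is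
encoded as a difference: all iterated cuts of the root component, minus those in which the second
edge lies above the first. -/
def sumIncomparableCuts (cut : α → List (Bool × OTree × α)) (x : α)
    (G : Bool → Bool → OTree → OTree → α → M) : M :=
  (sumCuts (cut x) fun b A B => sumCuts (cut B) fun c C D => G b c A C D) -
    sumCuts (cut x) fun b A B => sumCuts (cuts A) fun c C D => G c b C D B

theorem map_sumIncomparableCuts {H : Type*} [FunLike H M N] [AddMonoidHomClass H M N] (φ : H)
    (cut : α → List (Bool × OTree × α)) (x : α) (G : Bool → Bool → OTree → OTree → α → M) :
    φ (sumIncomparableCuts cut x G) =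
      sumIncomparableCuts cut x fun b c A C D => φ (G b c A C D) := by
  simp only [sumIncomparableCuts, map_sub, map_sumCuts]

theorem sumIncomparableCuts_cuts_node (l : List (Bool × OTree))
    (G : Bool → Bool → OTree → OTree → OTree → M) :
    sumIncomparableCuts cuts (.node l) G =
      sumIncomparableCuts cutsL l fun b c A C D => G b c A C (.node D) := by
  simp only [sumIncomparableCuts, sumCuts_cuts_node]

theorem sumIncomparableCuts_cutsL_nil (G : Bool → Bool → OTree → OTree → List (Bool × OTree) → M) :
    sumIncomparableCuts cutsL [] G = 0 := by
  simp only [sumIncomparableCuts, sumCuts_cutsL_nil, sub_zero]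

theorem sumIncomparableCuts_cutsL_cons (b : Bool) (t : OTree) (ts : List (Bool × OTree))
    (G : Bool → Bool → OTree → OTree → List (Bool × OTree) → M) :
    sumIncomparableCuts cutsL ((b, t) :: ts) G =
      (sumIncomparableCuts cuts t fun c d A C D => G c d A C ((b, D) :: ts)) +
      (sumIncomparableCuts cutsL ts fun c d A C D => G c d A C ((b, t) :: D)) +
      ((sumCuts (cutsL ts) fun c C D => G b c t C D) +
        sumCuts (cutsL ts) fun c C D => G c b C t D) +
      ((sumCuts (cuts t) fun c A B => sumCuts (cutsL ts) fun d C D => G c d A C ((b, B) :: D)) +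
        sumCuts (cuts t) fun c A B => sumCuts (cutsL ts) fun d C D =>
          G d c C A ((b, B) :: D)) := by
  rw [sumCuts_comm (cuts t) (cutsL ts) fun c A B d C D => G d c C A ((b, B) :: D)]
  simp only [sumIncomparableCuts, sumCuts_cutsL_cons, sumCuts_add]
  abel

mutual

theorem sumIncomparableCuts_cuts_swap :
    ∀ (t : OTree) (G : Bool → Bool → OTree → OTree → OTree → M),
      (sumIncomparableCuts cuts t fun b c A C D => G c b C A D) = sumIncomparableCuts cuts t G
  | .node l, G => by
    rw [sumIncomparableCuts_cuts_node, sumIncomparableCuts_cuts_node]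
    exact sumIncomparableCuts_cutsL_swap l fun b c A C D => G b c A C (.node D)

theorem sumIncomparableCuts_cutsL_swap :
    ∀ (l : List (Bool × OTree)) (G : Bool → Bool → OTree → OTree → List (Bool × OTree) → M),
      (sumIncomparableCuts cutsL l fun b c A C D => G c b C A D) = sumIncomparableCuts cutsL l G
  | [], G => by rw [sumIncomparableCuts_cutsL_nil, sumIncomparableCuts_cutsL_nil]
  | (b, t) :: ts, G => by
    rw [sumIncomparableCuts_cutsL_cons, sumIncomparableCuts_cutsL_cons,
      sumIncomparableCuts_cuts_swap t fun c d A C D => G c d A C ((b, D) :: ts),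
      sumIncomparableCuts_cutsL_swap ts fun c d A C D => G c d A C ((b, t) :: D)]
    abel

end

end IncomparableCuts

section CutCoproduct

variable {k}

/-- The coproduct `t ↦ ∑ₑ w(e) • B ⊗ A` on the free module on planar rooted trees, where `A` is the
branch cut off by `e`, `B` is the component of the root, and `w(e)` depends only on the orientation
of `e`. -/
def cutCoproduct (w : Bool → k) : (OTree →₀ k) →ₗ[k] (OTree →₀ k) ⊗[k] (OTree →₀ k) :=
  Finsupp.linearCombination k fun t =>
    sumCuts (cuts t) fun b A B => w b • (Finsupp.single B 1 ⊗ₜ Finsupp.single A 1)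

theorem cutCoproduct_single (w : Bool → k) (t : OTree) :
    cutCoproduct w (Finsupp.single t 1) =
      sumCuts (cuts t) fun b A B => w b • (Finsupp.single B 1 ⊗ₜ Finsupp.single A 1) := by
  rw [cutCoproduct, Finsupp.linearCombination_single, one_smul]

theorem coassociator_cutCoproduct_single (w : Bool → k) (t : OTree) :
    coassociator (cutCoproduct w) (Finsupp.single t 1) =
      sumIncomparableCuts cuts t fun b c A C D => (w b * w c) •
        (Finsupp.single D 1 ⊗ₜ (Finsupp.single C 1 ⊗ₜ Finsupp.single A 1)) := by
  simp only [coassociator_apply, leftIter_apply, sumIncomparableCuts, cutCoproduct_single,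
    map_sumCuts, map_smul, LinearMap.rTensor_tmul, LinearMap.lTensor_tmul, sumCuts_tmul,
    tmul_sumCuts, smul_sumCuts, ← TensorProduct.smul_tmul', TensorProduct.tmul_smul,
    TensorProduct.assoc_tmul, smul_smul, mul_comm]

theorem isCoPreLie_cutCoproduct (w : Bool → k) : IsCoPreLie (cutCoproduct w) := by
  refine Finsupp.lhom_ext' fun t => LinearMap.ext_ring ?_
  let G (b c : Bool) (A C D : OTree) : (OTree →₀ k) ⊗[k] ((OTree →₀ k) ⊗[k] (OTree →₀ k)) :=
    (w b * w c) • (Finsupp.single D 1 ⊗ₜ (Finsupp.single C 1 ⊗ₜ Finsupp.single A 1))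
  have hG (b c : Bool) (A C D : OTree) :
      LinearMap.lTensor _ (tau2 k _) (G b c A C D) = G c b C A D := by
    simp only [G, map_smul, LinearMap.lTensor_tmul, tau2, LinearEquiv.coe_coe,
      TensorProduct.comm_tmul, mul_comm (w b)]
  have hcoassociator : coassociator (cutCoproduct w) (Finsupp.single t 1) =
      sumIncomparableCuts cuts t G := coassociator_cutCoproduct_single w t
  calc LinearMap.lTensor _ (tau2 k _) (coassociator (cutCoproduct w) (Finsupp.single t 1))
      = sumIncomparableCuts cuts t fun b c A C D => G c b C A D := by
        simp only [hcoassociator, map_sumIncomparableCuts, hG]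
    _ = coassociator (cutCoproduct w) (Finsupp.single t 1) := by
        rw [sumIncomparableCuts_cuts_swap, hcoassociator]

end CutCoproduct

section Invariance

variable {M : Type*} [AddCommMonoid M]

/-- Isomorphism classes of rooted oriented trees. -/
def RootedIso : Type := Quot EquivP

/-- The isomorphism class of the rooted tree represented by `t`. -/
def toRootedIso (t : OTree) : RootedIso := Quot.mk EquivP t

/-- The isomorphism class of the oriented tree represented by `t`. -/
def toIso (t : OTree) : OTreeIso := Quot.mk Rel t

mutual

theorem EquivP.refl : ∀ t, EquivP t t
  | .node l => .node rfl (EquivP.forall₂_refl l) (List.Perm.refl l)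

theorem EquivP.forall₂_refl :
    ∀ l : List (Bool × OTree), List.Forall₂ EquivP (l.map Prod.snd) (l.map Prod.snd)
  | [] => .nil
  | (_, t) :: ts => .cons (EquivP.refl t) (EquivP.forall₂_refl ts)

end

theorem EquivP.of_perm {l l' : List (Bool × OTree)} (h : l.Perm l') :
    EquivP (.node l) (.node l') :=
  .node rfl (EquivP.forall₂_refl l) h

theorem EquivP.cons (b : Bool) {t t' : OTree} {l l' : List (Bool × OTree)} (ht : EquivP t t')
    (hl : EquivP (.node l) (.node l')) :
    EquivP (.node ((b, t) :: l)) (.node ((b, t') :: l')) := by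
  cases hl with
  | @node _ l₂ _ hfst hsnd hperm =>
    exact .node (l₂ := (b, t') :: l₂) (by simp [hfst]) (.cons ht hsnd) (hperm.cons _)

/-- Attaching the rooted tree `s` as a new child of the root of `t`, along an edge of
orientation `b`. -/
def RootedIso.graft (b : Bool) : RootedIso → RootedIso → RootedIso :=
  Quot.map₂ (fun | s, .node l => .node ((b, s) :: l))
    (fun | s, .node _, .node _, h => .cons b (.refl s) h)
    (fun | _, _, .node l, h => .cons b h (.refl (.node l)))

theorem toRootedIso_node_cons (b : Bool) (t : OTree) (ts : List (Bool × OTree)) :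
    toRootedIso (.node ((b, t) :: ts)) = .graft b t.toRootedIso (toRootedIso (.node ts)) := rfl

theorem RootedIso.graft_left_comm (b c : Bool) (r s t : RootedIso) :
    graft b r (graft c s t) = graft c s (graft b r t) := by
  induction r using Quot.ind
  induction s using Quot.ind
  induction t using Quot.ind with
  | mk t =>
    obtain ⟨l⟩ := t
    exact Quot.sound (.of_perm (.swap ..))

theorem sumCuts_cutsL_perm {l l' : List (Bool × OTree)} (h : l.Perm l')
    (F : Bool → RootedIso → RootedIso → M) :
    (sumCuts (cutsL l) fun b A B => F b A.toRootedIso (toRootedIso (.node B))) =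
      sumCuts (cutsL l') fun b A B => F b A.toRootedIso (toRootedIso (.node B)) := by
  induction h generalizing F with
  | nil => rfl
  | @cons p l l' h ih =>
    obtain ⟨b, t⟩ := p
    have hl : toRootedIso (.node l) = toRootedIso (.node l') := Quot.sound (.of_perm h)
    simp only [sumCuts_cutsL_cons, toRootedIso_node_cons, hl,
      ih fun c A B => F c A (.graft b t.toRootedIso B)]
  | swap p q l =>
    obtain ⟨b, t⟩ := p
    obtain ⟨c, u⟩ := q
    simp only [sumCuts_cutsL_cons, toRootedIso_node_cons, RootedIso.graft_left_comm b c]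
    abel
  | trans _ _ ih₁ ih₂ => rw [ih₁ F, ih₂ F]

mutual

theorem sumCuts_cuts_of_equivP :
    ∀ {t t' : OTree}, EquivP t t' → ∀ F : Bool → RootedIso → RootedIso → M,
      (sumCuts (cuts t) fun b A B => F b A.toRootedIso B.toRootedIso) =
        sumCuts (cuts t') fun b A B => F b A.toRootedIso B.toRootedIso
  | .node l, .node l', .node hfst hsnd hperm, F => by
    rw [sumCuts_cuts_node, sumCuts_cuts_node, sumCuts_cutsL_of_forall₂ hfst hsnd F,
      sumCuts_cutsL_perm hperm F]

theorem sumCuts_cutsL_of_forall₂ :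
    ∀ {l l' : List (Bool × OTree)}, l.map Prod.fst = l'.map Prod.fst →
      List.Forall₂ EquivP (l.map Prod.snd) (l'.map Prod.snd) →
      ∀ F : Bool → RootedIso → RootedIso → M,
      (sumCuts (cutsL l) fun b A B => F b A.toRootedIso (toRootedIso (.node B))) =
        sumCuts (cutsL l') fun b A B => F b A.toRootedIso (toRootedIso (.node B))
  | [], [], _, _, _ => rfl
  | (b, t) :: ts, (b', t') :: ts', hfst, .cons ht hsnd, F => by
    obtain ⟨rfl, htail⟩ := List.cons.inj hfst
    have ht_class : t.toRootedIso = t'.toRootedIso := Quot.sound ht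
    have hts_class : toRootedIso (.node ts) = toRootedIso (.node ts') :=
      Quot.sound (.node htail hsnd (.refl _))
    simp only [sumCuts_cutsL_cons, toRootedIso_node_cons, ht_class, hts_class,
      sumCuts_cuts_of_equivP ht fun c A B => F c A (.graft b B (toRootedIso (.node ts'))),
      sumCuts_cutsL_of_forall₂ htail hsnd fun c A B => F c A (.graft b t'.toRootedIso B)]

end

/-- The symmetry hypothesis says that `F` does not see which side of a cut contains the root. -/
theorem sumCuts_cuts_of_rel {t t' : OTree} (h : Rel t t')
    (F : Bool → OTreeIso → OTreeIso → M) (hF : ∀ b A B, F (!b) B A = F b A B) :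
    (sumCuts (cuts t) fun b A B => F b A.toIso B.toIso) =
      sumCuts (cuts t') fun b A B => F b A.toIso B.toIso := by
  cases h with
  | perm h =>
    let unroot : RootedIso → OTreeIso := Quot.map id fun _ _ => Rel.perm
    exact sumCuts_cuts_of_equivP h fun b A B => F b (unroot A) (unroot B)
  | @reroot b ls ts =>
    have reroot_toIso (c : Bool) (us vs : List (Bool × OTree)) :
        toIso (.node ((c, .node us) :: vs)) = toIso (.node (us ++ [(!c, .node vs)])) :=
      Quot.sound .reroot
    simp only [sumCuts_cuts_node, sumCuts_cutsL_cons, sumCuts_cutsL_append, sumCuts_cutsL_nil,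
      reroot_toIso, List.append_nil, add_zero, hF]
    abel

theorem toIso_out (q : OTreeIso) : toIso (Quot.out q) = q := Quot.out_eq q

theorem sumCuts_cuts_of_toIso_eq {t t' : OTree} (h : t.toIso = t'.toIso)
    (F : Bool → OTreeIso → OTreeIso → M) (hF : ∀ b A B, F (!b) B A = F b A B) :
    (sumCuts (cuts t) fun b A B => F b A.toIso B.toIso) =
      sumCuts (cuts t') fun b A B => F b A.toIso B.toIso :=
  congrArg (Quot.lift (fun t => sumCuts (cuts t) fun b A B => F b A.toIso B.toIso)
    fun _ _ hrel => sumCuts_cuts_of_rel hrel F hF) h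

end Invariance

end OTree

open OTree

/-- The sign `1` or `-1` of an edge oriented away from, respectively towards, the root. -/
def orientationSign (b : Bool) : k := if b then 1 else -1

theorem orientationSign_smul_sub {M : Type*} [AddCommGroup M] [Module k M] (b : Bool) (x y : M) :
    orientationSign k b • (x - y) = if b then x - y else y - x := by
  cases b <;> simp [orientationSign]

theorem orientationSign_not_smul_sub {M : Type*} [AddCommGroup M] [Module k M] (b : Bool)
    (x y : M) : orientationSign k (!b) • (x - y) = orientationSign k b • (y - x) := by
  cases b <;> simp [orientationSign_smul_sub]

/-- The linear map sending a rooted tree to its underlying unrooted tree. -/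
def forgetRoot : (OTree →₀ k) →ₗ[k] Tor k := Finsupp.lmapDomain k k toIso

theorem forgetRoot_single (t : OTree) : forgetRoot k (Finsupp.single t 1) = otv k t := by
  rw [forgetRoot, Finsupp.lmapDomain_apply, Finsupp.mapDomain_single]
  rfl

theorem forgetRoot_surjective : Function.Surjective (forgetRoot k) :=
  Finsupp.mapDomain_surjective Quot.mk_surjective

theorem rhoO_single (q : OTreeIso) :
    rhoO k (Finsupp.single q 1) = sumCuts (cuts (Quot.out q)) fun b A B =>
      orientationSign k b • (otv k B ⊗ₜ[k] otv k A - otv k A ⊗ₜ[k] otv k B) := by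
  rw [rhoO, Finsupp.lift_apply, Finsupp.sum_single_index (by exact zero_smul k _), one_smul]
  refine congrArg List.sum (List.map_congr_left ?_)
  rintro ⟨b, A, B⟩ -
  refine Eq.trans ?_ (orientationSign_smul_sub k b
    (otv k B ⊗ₜ[k] otv k A) (otv k A ⊗ₜ[k] otv k B)).symm
  cases b <;> rfl

theorem rhoO_otv (t : OTree) :
    rhoO k (otv k t) = sumCuts (cuts t) fun b A B =>
      orientationSign k b • (otv k B ⊗ₜ[k] otv k A - otv k A ⊗ₜ[k] otv k B) := by
  let F (b : Bool) (A B : OTreeIso) : Tor k ⊗[k] Tor k :=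
    orientationSign k b •
      (Finsupp.single B 1 ⊗ₜ Finsupp.single A 1 - Finsupp.single A 1 ⊗ₜ Finsupp.single B 1)
  have hF (b : Bool) (A B : OTreeIso) : F (!b) B A = F b A B :=
    orientationSign_not_smul_sub ..
  calc rhoO k (Finsupp.single t.toIso 1)
      = sumCuts (cuts (Quot.out t.toIso)) fun b A B => F b A.toIso B.toIso :=
        rhoO_single k t.toIso
    _ = sumCuts (cuts t) fun b A B => F b A.toIso B.toIso :=
        sumCuts_cuts_of_toIso_eq (toIso_out _) F hF

theorem rhoO_comp_forgetRoot :
    rhoO k ∘ₗ forgetRoot k = TensorProduct.map (forgetRoot k) (forgetRoot k) ∘ₗ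
      cocommutator (cutCoproduct (orientationSign k)) := by
  refine Finsupp.lhom_ext' fun t => LinearMap.ext_ring ?_
  simp only [LinearMap.comp_apply, Finsupp.lsingle_apply, cocommutator_apply,
    map_sub, cutCoproduct_single, map_sumCuts, forgetRoot_single, rhoO_otv,
    map_smul, TensorProduct.map_tmul, tau2, LinearEquiv.coe_coe, TensorProduct.comm_tmul, smul_sub,
    sumCuts_sub]

/-- `ρ^ss_O` is a Lie cobracket on `T_or`. -/
theorem rhoO_isLieCobracket : IsLieCobracket (rhoO k) :=
  (isCoPreLie_cutCoproduct (orientationSign k)).isLieCobracket_cocommutator.of_surjective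
    (forgetRoot_surjective k) (rhoO_comp_forgetRoot k)

end
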